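/- arXiv:math/0611151 — 4 statements merged into one kernel-verified Lean document; each statement's English description precedes it below -/
import Mathlib

section
/- Let p be a prime with p ≡ 1 (mod 3). Then there exist positive integers L and M with 4p = L² + 27M², and the set of all integer pairs (x, y) satisfying 4p = x² + 27y² is exactly the four-element set {(L, M), (L, −M), (−L, M), (−L, −M)}. -/
/-!
Since `p ≡ 1 (mod 3)`, the field `ZMod p` contains a primitive cube root of unity `ζ`, and
`(2ζ + 1)² = -3`. Thue's lemma applied to a square root of `-3` represents a multiple `m * p` with
`0 < m ≤ 3` by the form `a² + 3b²`; as `p` is odd, this descends to `p = a² + 3b²`.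
Multiplying by `4 = 2² + 3·0² = 1² + 3·(±1)²` turns the second variable into `2b` or `a ± b`; as
`3 ∤ a`, one of these is divisible by `3`, which gives `4p = x² + 27y²`.

For uniqueness, two representations `cp = L² + dM² = x² + dy²` satisfy
`p ∣ (Ly + Mx)(Ly - Mx)`, while Brahmagupta's identity writes `(cp)²` as
`(Lx ∓ dMy)² + d(Ly ± Mx)²`. When `c² < d` this forces the factor divisible by `p` to vanish.
-/

theorem isSquare_neg_three_of_isPrimitiveRoot {R : Type*} [CommRing R] [IsDomain R] {ζ : R}
    (hζ : IsPrimitiveRoot ζ 3) : IsSquare (-3 : R) := by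
  have hsum : 1 + ζ + ζ ^ 2 = 0 := by
    simpa [Finset.sum_range_succ] using hζ.geom_sum_eq_zero (by norm_num)
  exact ⟨2 * ζ + 1, by linear_combination (-4) * hsum⟩

theorem exists_isPrimitiveRoot_of_prime_dvd_card_sub_one {F : Type*} [Field F] [Finite F] {q : ℕ}
    (hq : q.Prime) (h : q ∣ Nat.card F - 1) : ∃ ζ : F, IsPrimitiveRoot ζ q := by
  have := Fact.mk hq
  rw [← Nat.card_units] at h
  obtain ⟨u, hu⟩ := exists_prime_orderOf_dvd_card' q h
  exact ⟨u, IsPrimitiveRoot.coe_units_iff.mpr (IsPrimitiveRoot.iff_orderOf.mpr hu)⟩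

theorem exists_intCast_eq_mul_abs_mul_le {m n : ℕ} (hm : 0 < m) (hn : 0 < n) (r : ZMod n) :
    ∃ a k : ℤ, 0 < k ∧ k ≤ m ∧ |a| * (m + 1) ≤ n ∧ (a : ZMod n) = k * r := by
  obtain ⟨r, rfl⟩ := ZMod.intCast_surjective r
  obtain ⟨j, k, hk, hkm, hjk⟩ := Real.exists_int_int_abs_mul_sub_le ((r : ℝ) / n) hm
  have hn' : (0 : ℝ) < n := by exact_mod_cast hn
  have hscale : ((k * r - j * n : ℤ) : ℝ) = (k * ((r : ℝ) / n) - j) * n := by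
    push_cast
    field_simp
  have hbound : |((k * r - j * n : ℤ) : ℝ)| * (m + 1) ≤ n := by
    rw [le_div_iff₀ (by positivity)] at hjk
    calc |((k * r - j * n : ℤ) : ℝ)| * (m + 1)
        = |k * ((r : ℝ) / n) - j| * (m + 1) * n := by
          rw [hscale, abs_mul, abs_of_pos hn', mul_right_comm]
      _ ≤ 1 * n := by gcongr
      _ = n := one_mul _
  exact ⟨k * r - j * n, k, hk, hkm, by exact_mod_cast hbound, by simp⟩

theorem thue_lemma {n : ℕ} (hn : 0 < n) (r : ZMod n) :
    ∃ a k : ℤ, 0 < k ∧ k ^ 2 ≤ n ∧ a ^ 2 < n ∧ (a : ZMod n) = k * r := by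
  obtain ⟨a, k, hk, hkn, ha, har⟩ :=
    exists_intCast_eq_mul_abs_mul_le (Nat.sqrt_pos.mpr hn) hn r
  have hsqrt_le : (n.sqrt : ℤ) ^ 2 ≤ n := by exact_mod_cast Nat.sqrt_le' n
  have hlt_sqrt : (n : ℤ) < (n.sqrt + 1) ^ 2 := by exact_mod_cast Nat.lt_succ_sqrt' n
  refine ⟨a, k, hk, (pow_le_pow_left₀ hk.le hkn 2).trans hsqrt_le, ?_, har⟩
  refine lt_of_mul_lt_mul_right ?_ (sq_nonneg (n.sqrt + 1 : ℤ))
  calc a ^ 2 * (n.sqrt + 1 : ℤ) ^ 2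
      = (|a| * (n.sqrt + 1)) ^ 2 := by rw [mul_pow, sq_abs]
    _ ≤ (n : ℤ) ^ 2 := by gcongr
    _ = n * n := sq _
    _ < n * (n.sqrt + 1 : ℤ) ^ 2 := by gcongr

theorem exists_mul_eq_sq_add_mul_sq {n d : ℕ} (hn : 0 < n) (hd : 0 < d)
    (h : IsSquare (-d : ZMod n)) :
    ∃ m a b : ℤ, 0 < m ∧ m ≤ d ∧ m * n = a ^ 2 + d * b ^ 2 := by
  obtain ⟨r, hr⟩ := h
  obtain ⟨a, b, hb, hbn, han, hab⟩ := thue_lemma hn r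
  obtain ⟨m, hm⟩ : (n : ℤ) ∣ a ^ 2 + d * b ^ 2 := by
    rw [← ZMod.intCast_zmod_eq_zero_iff_dvd _ n]
    push_cast
    rw [hab]
    linear_combination -(b : ZMod n) ^ 2 * hr
  have hpos : 0 < n * m := by rw [← hm]; positivity
  have hlt : n * m < n * (d + 1) := by
    calc n * m = a ^ 2 + d * b ^ 2 := hm.symm
      _ < n + d * n := add_lt_add_of_lt_of_le han (by gcongr)
      _ = n * (d + 1) := by ring
  exact ⟨m, a, b, pos_of_mul_pos_right hpos (by positivity),
    Int.lt_add_one_iff.mp (lt_of_mul_lt_mul_left hlt (by positivity)), by rw [mul_comm, hm]⟩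

theorem sq_add_three_mul_sq_emod_four_ne_two (a b : ℤ) : (a ^ 2 + 3 * b ^ 2) % 4 ≠ 2 := by
  rcases Int.even_or_odd' a with ⟨x, rfl | rfl⟩ <;>
    rcases Int.even_or_odd' b with ⟨y, rfl | rfl⟩ <;> ring_nf <;> omega

theorem exists_eq_sq_add_three_mul_sq {n : ℕ} (hn : Odd n) (h : IsSquare (-3 : ZMod n)) :
    ∃ a b : ℤ, (n : ℤ) = a ^ 2 + 3 * b ^ 2 := by
  obtain ⟨m, a, b, hm0, hm3, hm⟩ :=
    exists_mul_eq_sq_add_mul_sq hn.pos (d := 3) (by norm_num) (by exact_mod_cast h)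
  push_cast at hm hm3
  interval_cases m
  · exact ⟨a, b, by linarith⟩
  · have hmod_four := sq_add_three_mul_sq_emod_four_ne_two a b
    have hn_mod_two := Nat.odd_iff.mp hn
    omega
  · obtain ⟨c, rfl⟩ : (3 : ℤ) ∣ a := Int.prime_three.dvd_of_dvd_pow (n := 2) (by omega)
    exact ⟨b, c, by linarith⟩

theorem exists_four_mul_sq_add_three_mul_sq_eq {a : ℤ} (ha : ¬ 3 ∣ a) (b : ℤ) :
    ∃ x y : ℤ, 4 * (a ^ 2 + 3 * b ^ 2) = x ^ 2 + 27 * y ^ 2 := by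
  have hdvd : 3 ∣ b ∨ 3 ∣ a - b ∨ 3 ∣ a + b := by
    have ha' : a % 3 = 1 ∨ a % 3 = 2 := by omega
    rcases ha' with ha' | ha' <;> omega
  rcases hdvd with ⟨c, hc⟩ | ⟨c, hc⟩ | ⟨c, hc⟩
  · exact ⟨2 * a, 2 * c, by rw [hc]; ring⟩
  · exact ⟨a + 3 * b, c, by linear_combination 3 * (a - b + 3 * c) * hc⟩
  · exact ⟨a - 3 * b, c, by linear_combination 3 * (a + b + 3 * c) * hc⟩

theorem exists_four_mul_prime_eq_sq_add_mul_sq {p : ℕ} (hp : p.Prime) (hp3 : p % 3 = 1) :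
    ∃ x y : ℤ, (4 * p : ℤ) = x ^ 2 + 27 * y ^ 2 := by
  have := Fact.mk hp
  obtain ⟨ζ, hζ⟩ := exists_isPrimitiveRoot_of_prime_dvd_card_sub_one (F := ZMod p)
    Nat.prime_three (by rw [Nat.card_zmod]; omega)
  have hodd : Odd p := hp.odd_of_ne_two (by rintro rfl; omega)
  obtain ⟨a, b, hab⟩ :=
    exists_eq_sq_add_three_mul_sq hodd (isSquare_neg_three_of_isPrimitiveRoot hζ)
  have ha : ¬ 3 ∣ a := fun h ↦ by
    have := dvd_pow h two_ne_zero
    omega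
  rw [hab]
  exact exists_four_mul_sq_add_three_mul_sq_eq ha b

section Uniqueness

variable {p c d L M x y : ℤ}

theorem eq_zero_of_dvd_of_sq_add_mul_sq_eq {u v : ℤ} (hcd : c ^ 2 < d)
    (h : u ^ 2 + d * v ^ 2 = (c * p) ^ 2) (hv : p ∣ v) : v = 0 := by
  by_contra hv0
  have hv_pos : 0 < v ^ 2 := by positivity
  have hle : p ^ 2 ≤ v ^ 2 := Int.le_of_dvd hv_pos (pow_dvd_pow_of_dvd hv 2)
  have hlt : (c * p) ^ 2 < d * v ^ 2 :=
    calc (c * p) ^ 2 = c ^ 2 * p ^ 2 := mul_pow ..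
      _ ≤ c ^ 2 * v ^ 2 := by gcongr
      _ < d * v ^ 2 := by gcongr
  linarith [sq_nonneg u]

theorem mul_add_mul_eq_zero_of_dvd (hcd : c ^ 2 < d) (h : c * p = L ^ 2 + d * M ^ 2)
    (h' : c * p = x ^ 2 + d * y ^ 2) (hdvd : p ∣ L * y + M * x) : L * y + M * x = 0 := by
  refine eq_zero_of_dvd_of_sq_add_mul_sq_eq (u := L * x - d * M * y) hcd ?_ hdvd
  calc (L * x - d * M * y) ^ 2 + d * (L * y + M * x) ^ 2
      = (L ^ 2 + d * M ^ 2) * (x ^ 2 + d * y ^ 2) := sq_add_mul_sq_mul_sq_add_mul_sq.symm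
    _ = (c * p) ^ 2 := by rw [← h, ← h', sq (c * p)]

theorem sq_eq_sq_of_mul_prime_eq (hp : Prime p) (hc : c ≠ 0) (hcd : c ^ 2 < d)
    (h : c * p = L ^ 2 + d * M ^ 2) (h' : c * p = x ^ 2 + d * y ^ 2) :
    x ^ 2 = L ^ 2 ∧ y ^ 2 = M ^ 2 := by
  have hfactor : (L * y + M * x) * (L * -y + M * x) = p * (c * (M ^ 2 - y ^ 2)) := by
    linear_combination y ^ 2 * h - M ^ 2 * h'
  have hzero : (L * y + M * x) * (L * -y + M * x) = 0 := by
    rcases hp.dvd_or_dvd ⟨_, hfactor⟩ with hdvd | hdvd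
    · rw [mul_add_mul_eq_zero_of_dvd hcd h h' hdvd, zero_mul]
    · rw [mul_add_mul_eq_zero_of_dvd hcd h (by rwa [neg_sq]) hdvd, mul_zero]
  have hy : y ^ 2 = M ^ 2 := by
    rw [hfactor] at hzero
    have hsub : M ^ 2 - y ^ 2 = 0 := by
      simpa only [mul_eq_zero, hp.ne_zero, hc, false_or] using hzero
    exact (sub_eq_zero.mp hsub).symm
  exact ⟨by linear_combination h - h' - d * hy, hy⟩

theorem setOf_mul_prime_eq_sq_add_mul_sq (hp : Prime p) (hc : c ≠ 0) (hcd : c ^ 2 < d)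
    (h : c * p = L ^ 2 + d * M ^ 2) :
    {xy : ℤ × ℤ | c * p = xy.1 ^ 2 + d * xy.2 ^ 2} =
      {(L, M), (L, -M), (-L, M), (-L, -M)} := by
  ext ⟨x, y⟩
  simp only [Set.mem_ofPred_eq, Set.mem_insert_iff, Set.mem_singleton_iff, Prod.mk.injEq]
  constructor
  · intro h'
    obtain ⟨hx, hy⟩ := sq_eq_sq_of_mul_prime_eq hp hc hcd h h'
    have hx' := sq_eq_sq_iff_eq_or_eq_neg.mp hx
    have hy' := sq_eq_sq_iff_eq_or_eq_neg.mp hy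
    tauto
  · rintro (⟨rfl, rfl⟩ | ⟨rfl, rfl⟩ | ⟨rfl, rfl⟩ | ⟨rfl, rfl⟩) <;> simpa only [neg_sq] using h

end Uniqueness

theorem ne_zero_of_four_mul_prime_eq {p : ℕ} (hp : p.Prime) (hp3 : p % 3 = 1) {x y : ℤ}
    (h : (4 * p : ℤ) = x ^ 2 + 27 * y ^ 2) : x ≠ 0 ∧ y ≠ 0 := by
  constructor
  · rintro rfl
    omega
  · rintro rfl
    obtain ⟨c, rfl⟩ : (2 : ℤ) ∣ x := Int.prime_two.dvd_of_dvd_pow (n := 2) (by omega)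
    have hpc : (p : ℤ) = c * c := by linarith
    exact (Nat.prime_iff_prime_int.mp hp).irreducible.not_isSquare ⟨c, hpc⟩

/-- For a prime `p ≡ 1 (mod 3)` there are positive integers `L, M` with `4p = L² + 27M²`,
and the representations of `4p` in this form are exactly `(±L, ±M)`. -/
theorem four_p_representations (p : ℕ) (hp : p.Prime) (hp3 : p % 3 = 1) :
    ∃ L M : ℤ, 0 < L ∧ 0 < M ∧ (4 * p : ℤ) = L ^ 2 + 27 * M ^ 2 ∧
      {xy : ℤ × ℤ | (4 * p : ℤ) = xy.1 ^ 2 + 27 * xy.2 ^ 2} =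
        {(L, M), (L, -M), (-L, M), (-L, -M)} := by
  obtain ⟨x, y, h⟩ := exists_four_mul_prime_eq_sq_add_mul_sq hp hp3
  obtain ⟨hx, hy⟩ := ne_zero_of_four_mul_prime_eq hp hp3 h
  have habs : (4 * p : ℤ) = |x| ^ 2 + 27 * |y| ^ 2 := by rwa [sq_abs, sq_abs]
  exact ⟨|x|, |y|, abs_pos.mpr hx, abs_pos.mpr hy, habs,
    setOf_mul_prime_eq_sq_add_mul_sq (Nat.prime_iff_prime_int.mp hp) (by norm_num) (by norm_num)
      habs⟩
end

section
/- Let q ∈ {2, 3, 5, 7}, let p be a prime with p ≡ 1 (mod 3) and p ≠ q, and let L, M be integers with 4p = L² + 27M². Then q is a cubic residue modulo p if and only if q divides L or q divides M. -/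
/-!
Let `χ` be a cubic character mod `p` and let `η₀, η₁, η₂` be the Gaussian periods of order three,
the sums of `e(x / p)` over the cosets of the cubes. Writing the periods in terms of the Gauss sums
of `χ` and `χ²`, and `2 J(χ, χ) = L - 3 √-3 M`, one finds that `4p = L² + 27M²` and that
`∏ (3ηᵢ + 1) = p L` and `(η₀ - η₁) (η₁ - η₂) (η₂ - η₀) = p M`; moreover `L` and `M` are determined
by `p` up to sign. Reduce the periods modulo a prime above `q`. The Frobenius map sends the period
of the coset `C` to that of `q C`. If `q` is not a cube, it permutes the periods cyclically, so that
none of the factors of the two products can vanish. If `q` is a cube, the reduced periods lie in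
`𝔽_q`, and for `q ≤ 7` the field is so small that one of the two products vanishes.
-/

open Finset

theorem natAbs_eq_of_mul_prime_eq_sq_add_mul_sq {m p d x y u v : ℤ} (hp : Prime p) (hm : m ≠ 0)
    (hd : m ^ 2 < d) (hxy : m * p = x ^ 2 + d * y ^ 2) (huv : m * p = u ^ 2 + d * v ^ 2) :
    x.natAbs = u.natAbs ∧ y.natAbs = v.natAbs := by
  have of_dvd {t : ℤ} (hut : m * p = u ^ 2 + d * t ^ 2) (hdvd : p ∣ x * t - u * y) :
      x ^ 2 = u ^ 2 ∧ y ^ 2 = t ^ 2 := by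
    obtain ⟨k, hk⟩ := hdvd
    have norm_mul : m ^ 2 * p ^ 2 = (x * u + d * y * t) ^ 2 + d * (p * k) ^ 2 := by
      rw [← hk]
      linear_combination (m * p) * hxy + (x ^ 2 + d * y ^ 2) * hut
    have hk0 : k = 0 := by
      by_contra hk0
      have hp2 : 0 < p ^ 2 := by have := hp.ne_zero; positivity
      have hk2 : 0 < k ^ 2 := by positivity
      nlinarith [sq_nonneg (x * u + d * y * t), mul_le_mul_of_nonneg_left hk2 hp2.le]
    have hyt : m * p * (y ^ 2 - t ^ 2) = 0 := by
      rw [hk0, mul_zero] at hk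
      linear_combination y ^ 2 * hut - t ^ 2 * hxy - (x * t + u * y) * hk
    have hyt : y ^ 2 = t ^ 2 :=
      sub_eq_zero.mp ((mul_eq_zero.mp hyt).resolve_left (mul_ne_zero hm hp.ne_zero))
    exact ⟨by linear_combination hut - hxy - d * hyt, hyt⟩
  have hdvd : p ∣ (x * v - u * y) * (x * -v - u * y) :=
    ⟨m * (y ^ 2 - v ^ 2), by linear_combination v ^ 2 * hxy - y ^ 2 * huv⟩
  simp only [Int.natAbs_eq_iff_sq_eq]
  rcases hp.dvd_or_dvd hdvd with hdvd | hdvd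
  · exact of_dvd huv hdvd
  · simpa only [neg_sq] using of_dvd (t := -v) (by rwa [neg_sq]) hdvd

/-- The relations satisfied by the three Gaussian periods of order three of a field with `n`
elements, where `4n = L² + 27M²`. They involve no division, so that they can be reduced modulo any
prime, including 3. -/
structure IsCubicPeriodTriple {R : Type*} [CommRing R] (n : ℕ) (L M : ℤ) (a b c : R) : Prop where
  add_eq : a + b + c = -1
  three_mul_eq : 3 * (a * b + b * c + c * a) = 1 - n
  prod_eq : (3 * a + 1) * (3 * b + 1) * (3 * c + 1) = n * L
  prod_sub_eq : (a - b) * (b - c) * (c - a) = n * M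

namespace IsCubicPeriodTriple

variable {R S : Type*} [CommRing R] [CommRing S] {n : ℕ} {L M : ℤ} {a b c : R}

theorem map (h : IsCubicPeriodTriple n L M a b c) (f : R →+* S) :
    IsCubicPeriodTriple n L M (f a) (f b) (f c) where
  add_eq := by simpa using congrArg f h.add_eq
  three_mul_eq := by simpa [map_ofNat] using congrArg f h.three_mul_eq
  prod_eq := by simpa [map_ofNat] using congrArg f h.prod_eq
  prod_sub_eq := by simpa using congrArg f h.prod_sub_eq

theorem of_map {f : R →+* S} (hf : Function.Injective f)
    (h : IsCubicPeriodTriple n L M (f a) (f b) (f c)) : IsCubicPeriodTriple n L M a b c where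
  add_eq := hf (by simpa using h.add_eq)
  three_mul_eq := hf (by simpa [map_ofNat] using h.three_mul_eq)
  prod_eq := hf (by simpa [map_ofNat] using h.prod_eq)
  prod_sub_eq := hf (by simpa using h.prod_sub_eq)

theorem rotate (h : IsCubicPeriodTriple n L M a b c) : IsCubicPeriodTriple n L M b c a where
  add_eq := by linear_combination h.add_eq
  three_mul_eq := by linear_combination h.three_mul_eq
  prod_eq := by linear_combination h.prod_eq
  prod_sub_eq := by linear_combination h.prod_sub_eq

theorem of_resolvents [IsDomain R] (h3 : (3 : R) ≠ 0) {ω g g' : R} (hω : ω ^ 2 + ω + 1 = 0)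
    (hadd : a + b + c = -1) (hg : g = a + ω * b + ω ^ 2 * c) (hg' : g' = a + ω ^ 2 * b + ω * c)
    (hmul : g * g' = n) (hadd_cube : g ^ 3 + g' ^ 3 = n * L)
    (hsub_cube : g ^ 3 - g' ^ 3 = -3 * (2 * ω + 1) * n * M) : IsCubicPeriodTriple n L M a b c where
  add_eq := hadd
  three_mul_eq := by
    have hgg : g * g' = (a + b + c) ^ 2 - 3 * (a * b + b * c + c * a) := by
      rw [hg, hg']
      linear_combination (a * (b + c) + (ω - 1) * (b ^ 2 + c ^ 2) +
        (ω ^ 2 - ω + 1) * (b * c)) * hω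
    linear_combination (a + b + c - 1) * hadd + hgg - hmul
  prod_eq := by
    have ha : 3 * a + 1 = g + g' := by
      linear_combination hadd - (b + c) * hω - hg - hg'
    have hb : 3 * b + 1 = ω ^ 2 * g + ω * g' := by
      linear_combination hadd - (a + 2 * (ω - 1) * b + (ω ^ 2 - ω + 1) * c) * hω -
        ω ^ 2 * hg - ω * hg'
    have hc : 3 * c + 1 = ω * g + ω ^ 2 * g' := by
      linear_combination hadd - (a + (ω ^ 2 - ω + 1) * b + 2 * (ω - 1) * c) * hω -
        ω * hg - ω ^ 2 * hg'
    rw [ha, hb, hc, ← hadd_cube]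
    linear_combination (g + g') *
      ((ω - 1) * (g ^ 2 + g' ^ 2) + (ω ^ 2 - ω + 1) * (g * g')) * hω
  prod_sub_eq := by
    have hab : (2 * ω + 1) * (a - b) = ω * g - ω ^ 2 * g' := by
      linear_combination (a - (1 + ω - ω ^ 2) * b) * hω - ω * hg + ω ^ 2 * hg'
    have hbc : (2 * ω + 1) * (b - c) = g - g' := by
      linear_combination (b - c) * hω - hg + hg'
    have hca : (2 * ω + 1) * (c - a) = ω ^ 2 * g - ω * g' := by
      linear_combination ((1 + ω - ω ^ 2) * c - a) * hω - ω ^ 2 * hg + ω * hg'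
    have hsq : (2 * ω + 1) ^ 2 = -3 := by linear_combination 4 * hω
    have hθ : 2 * ω + 1 ≠ 0 := fun h0 ↦ h3 (by linear_combination hsq - (2 * ω + 1) * h0)
    apply mul_left_cancel₀ (mul_ne_zero (neg_ne_zero.mpr h3) hθ)
    calc -3 * (2 * ω + 1) * ((a - b) * (b - c) * (c - a))
        = ((2 * ω + 1) * (a - b)) * ((2 * ω + 1) * (b - c)) * ((2 * ω + 1) * (c - a)) := by
          rw [← hsq]; ring
      _ = g ^ 3 - g' ^ 3 := by
          rw [hab, hbc, hca]
          linear_combination (g - g') *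
            ((ω - 1) * (g ^ 2 + g' ^ 2) - (ω ^ 2 - ω + 1) * (g * g')) * hω
      _ = -3 * (2 * ω + 1) * (n * M) := by rw [hsub_cube]; ring

section Cycle

variable {φ : R →+* R}

theorem sub_ne_zero_of_cycle (h : IsCubicPeriodTriple n L M a b c) (hn : (n : R) ≠ 0)
    (hab : φ a = b) (hbc : φ b = c) : a - b ≠ 0 := by
  intro h0
  obtain rfl : a = b := sub_eq_zero.mp h0
  obtain rfl : a = c := hab.symm.trans hbc
  exact hn (by linear_combination h.three_mul_eq - (3 * a - 1) * h.add_eq)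

theorem three_mul_add_one_ne_zero_of_cycle [IsDomain R] (h : IsCubicPeriodTriple n L M a b c)
    (hn : (n : R) ≠ 0) (hab : φ a = b) (hbc : φ b = c) : 3 * a + 1 ≠ 0 := by
  intro ha
  have hb : 3 * b + 1 = 0 := by simpa [hab, map_ofNat] using congrArg φ ha
  have hc : 3 * c + 1 = 0 := by simpa [hbc, map_ofNat] using congrArg φ hb
  have h3 : (3 : R) ≠ 0 := by rintro h3; simp [h3] at ha
  apply mul_ne_zero h3 hn
  linear_combination 3 * h.three_mul_eq - (3 * b - 1) * ha - (3 * c - 1) * hb - (3 * a - 1) * hc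

theorem ne_zero_of_cycle [IsDomain R] (h : IsCubicPeriodTriple n L M a b c) (hn : (n : R) ≠ 0)
    (hab : φ a = b) (hbc : φ b = c) (hca : φ c = a) : (L : R) ≠ 0 ∧ (M : R) ≠ 0 := by
  have hL : (n : R) * L ≠ 0 := h.prod_eq ▸ mul_ne_zero (mul_ne_zero
    (h.three_mul_add_one_ne_zero_of_cycle hn hab hbc)
    (h.rotate.three_mul_add_one_ne_zero_of_cycle hn hbc hca))
    (h.rotate.rotate.three_mul_add_one_ne_zero_of_cycle hn hca hab)
  have hM : (n : R) * M ≠ 0 := h.prod_sub_eq ▸ mul_ne_zero (mul_ne_zero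
    (h.sub_ne_zero_of_cycle hn hab hbc) (h.rotate.sub_ne_zero_of_cycle hn hbc hca))
    (h.rotate.rotate.sub_ne_zero_of_cycle hn hca hab)
  exact ⟨right_ne_zero_of_mul hL, right_ne_zero_of_mul hM⟩

end Cycle

section PrimeField

theorem prod_eq_zero_of_small_prime {q : ℕ} (hq : q ∈ ({2, 3, 5, 7} : Finset ℕ)) :
    ∀ a b c : ZMod q, a + b + c = -1 → 3 * (a * b + b * c + c * a) ≠ 1 →
      (a - b) * (b - c) * (c - a) ≠ 0 → (3 * a + 1) * (3 * b + 1) * (3 * c + 1) = 0 := by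
  simp only [mem_insert, mem_singleton] at hq
  rcases hq with rfl | rfl | rfl | rfl <;> decide

variable {q : ℕ} [Fact q.Prime]

theorem eq_zero_or_eq_zero_of_zmod (hq : q ∈ ({2, 3, 5, 7} : Finset ℕ)) {a b c : ZMod q}
    (h : IsCubicPeriodTriple n L M a b c) (hn : (n : ZMod q) ≠ 0) :
    (L : ZMod q) = 0 ∨ (M : ZMod q) = 0 := by
  refine or_iff_not_imp_right.mpr fun hM ↦ ?_
  have hprod := prod_eq_zero_of_small_prime hq a b c h.add_eq (by simpa [h.three_mul_eq] using hn)
    (h.prod_sub_eq ▸ mul_ne_zero hn hM)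
  exact (mul_eq_zero.mp (h.prod_eq.symm.trans hprod)).resolve_left hn

theorem eq_zero_or_eq_zero_of_frobenius_eq {K : Type*} [Field K] [CharP K q]
    (hq : q ∈ ({2, 3, 5, 7} : Finset ℕ)) {a b c : K} (h : IsCubicPeriodTriple n L M a b c)
    (hn : (n : K) ≠ 0) (ha : frobenius K q a = a) (hb : frobenius K q b = b)
    (hc : frobenius K q c = c) : (L : K) = 0 ∨ (M : K) = 0 := by
  let ι : ZMod q →+* K := ZMod.castHom dvd_rfl K
  have mem_range {x : K} (hx : frobenius K q x = x) : ∃ y, ι y = x := by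
    rwa [frobenius_def, ← Subfield.mem_bot_iff_pow_eq_self K q,
      ← ZMod.fieldRange_castHom_eq_bot q, RingHom.mem_fieldRange] at hx
  obtain ⟨a, rfl⟩ := mem_range ha
  obtain ⟨b, rfl⟩ := mem_range hb
  obtain ⟨c, rfl⟩ := mem_range hc
  have hn' : (n : ZMod q) ≠ 0 := fun h0 ↦ hn (by simpa using congrArg ι h0)
  simpa only [map_intCast, map_zero] using
    ((of_map ι.injective h).eq_zero_or_eq_zero_of_zmod hq hn').imp (congrArg ι) (congrArg ι)

end PrimeField

end IsCubicPeriodTriple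

section EisensteinIntegers

theorem sq_add_self_add_one_eq_zero {R : Type*} [CommRing R] [IsDomain R] {ω : R}
    (hω : IsPrimitiveRoot ω 3) : ω ^ 2 + ω + 1 = 0 := by
  simpa [Polynomial.IsRoot] using hω.isRoot_cyclotomic (by norm_num)

variable {R : Type*} [CommRing R] {ω : R}

theorem right_eq_of_int_add_mul_eq [CharZero R] (hω : ω ^ 2 + ω + 1 = 0)
    {a b c d : ℤ} (h : (a + b * ω : R) = c + d * ω) : b = d := by
  have norm_eq : ((a - c) ^ 2 - (a - c) * (b - d) + (b - d) ^ 2 : R) = 0 := by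
    linear_combination (a - c - (b - d) - (b - d) * ω) * h + ((b : R) - d) ^ 2 * hω
  have norm_eq : (a - c) ^ 2 - (a - c) * (b - d) + (b - d) ^ 2 = 0 := by exact_mod_cast norm_eq
  nlinarith [sq_nonneg (2 * (a - c) - (b - d)), sq_nonneg (b - d)]

theorem exists_eq_add_mul_of_mem_adjoin (hω : ω ^ 2 + ω + 1 = 0) {z : R}
    (hz : z ∈ Algebra.adjoin ℤ {ω}) : ∃ a b : ℤ, z = a + b * ω := by
  induction hz using Algebra.adjoin_induction with
  | mem x hx => exact ⟨0, 1, by simpa using hx⟩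
  | algebraMap r => exact ⟨r, 0, by simp⟩
  | add x y _ _ hx hy =>
    obtain ⟨a, b, rfl⟩ := hx
    obtain ⟨c, d, rfl⟩ := hy
    exact ⟨a + c, b + d, by push_cast; ring⟩
  | mul x y _ _ hx hy =>
    obtain ⟨a, b, rfl⟩ := hx
    obtain ⟨c, d, rfl⟩ := hy
    exact ⟨a * c - b * d, a * d + b * c - b * d, by
      push_cast; linear_combination (b * d : R) * hω⟩

end EisensteinIntegers

section MulChar

variable {F R : Type*} [Field F] [CommRing R]

theorem exists_pow_orderOf_eq_iff_mulChar_eq_one [Finite F] (χ : MulChar F R) {a : F} (ha : a ≠ 0) :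
    (∃ x, x ^ orderOf χ = a) ↔ χ a = 1 := by
  have hpos : orderOf χ ≠ 0 := χ.orderOf_pos.ne'
  constructor
  · rintro ⟨x, rfl⟩
    rw [map_pow, ← MulChar.pow_apply' _ hpos, pow_orderOf_eq_one,
      MulChar.one_apply (ne_zero_pow hpos ha).isUnit]
  · intro hχa
    obtain ⟨g, hg⟩ := IsCyclic.exists_generator (α := Fˣ)
    obtain ⟨k, hk⟩ := mem_powers_iff_mem_zpowers.mpr (hg (Units.mk0 a ha))
    have hgk : (g : F) ^ k = a := by simpa using congrArg Units.val hk
    have hχk : χ ^ k = 1 := by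
      rw [MulChar.eq_iff hg, MulChar.pow_apply_coe, ← map_pow, hgk, hχa, MulChar.one_apply_coe]
    obtain ⟨m, rfl⟩ := orderOf_dvd_of_pow_eq_one hχk
    exact ⟨(g : F) ^ m, by rw [← pow_mul', hgk]⟩

variable [IsDomain R] {χ : MulChar F R}

open scoped Classical in
theorem sum_mulChar_pow_mul_eq_sum_fiber [Finite F] {n : ℕ} [NeZero n] {ζ : R}
    (hζ : IsPrimitiveRoot ζ n) (hχ : χ ^ n = 1) (j : ℕ) {ι : Type*} [Fintype ι] (u : ι → F)
    (f : ι → R) :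
    ∑ x, (χ ^ j) (u x) * f x = ∑ k ∈ range n, ζ ^ (j * k) * ∑ x with χ (u x) = ζ ^ k, f x := by
  simp only [mul_sum, sum_filter]
  rw [sum_comm]
  refine sum_congr rfl fun x _ ↦ ?_
  by_cases hx : u x = 0
  · simp [hx, MulChar.map_zero, (pow_ne_zero _ (hζ.ne_zero (NeZero.ne n))).symm]
  · obtain ⟨i, hi, hχi⟩ := MulChar.exists_apply_eq_pow hχ hζ hx
    have hpow : (χ ^ j) (u x) = ζ ^ (j * i) := by
      obtain ⟨v, hv⟩ := Ne.isUnit hx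
      rw [← hv, MulChar.pow_apply_coe, hv, hχi, ← pow_mul']
    rw [sum_eq_single_of_mem i (mem_range.mpr hi), if_pos hχi, hpow]
    intro k hk hki
    rw [if_neg, mul_zero]
    exact fun h ↦ hki (hζ.pow_inj (mem_range.mp hk) hi (h.symm.trans hχi))

variable [Fintype F]

theorem exists_jacobiSum_pow_eq_sum {n : ℕ} [NeZero n] {ζ : R} (hζ : IsPrimitiveRoot ζ n)
    (hχ : χ ^ n = 1) :
    ∃ N : ℕ → ℤ, ∀ j, jacobiSum (χ ^ j) (χ ^ j) = ∑ k ∈ range n, ζ ^ (j * k) * N k := by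
  classical
  refine ⟨fun k ↦ #{x | χ (x * (1 - x)) = ζ ^ k}, fun j ↦ ?_⟩
  simpa [jacobiSum] using
    sum_mulChar_pow_mul_eq_sum_fiber hζ hχ j (fun x ↦ x * (1 - x)) fun _ ↦ 1

theorem gaussSum_pow_three_of_orderOf_eq_three (hχ : orderOf χ = 3) {ψ : AddChar F R}
    (hψ : ψ.IsPrimitive) : gaussSum χ ψ ^ 3 = Fintype.card F * jacobiSum χ χ := by
  have hχ2 : 2 ≤ orderOf χ := by lia
  have hneg : χ (-1) = 1 :=
    MulChar.val_neg_one_eq_one_of_odd_order (by decide) (hχ ▸ pow_orderOf_eq_one χ)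
  simpa [hχ, hneg] using gaussSum_pow_eq_prod_jacobiSum hχ2 hψ

theorem gaussSum_mul_gaussSum_sq_of_orderOf_eq_three (hχ : orderOf χ = 3) {ψ : AddChar F R}
    (hψ : ψ.IsPrimitive) : gaussSum χ ψ * gaussSum (χ ^ 2) ψ = Fintype.card F := by
  have hneg : χ (-1) = 1 :=
    MulChar.val_neg_one_eq_one_of_odd_order (by decide) (hχ ▸ pow_orderOf_eq_one χ)
  have hχ1 : χ ≠ 1 := by rintro rfl; simp at hχ
  simpa [hχ, hneg] using gaussSum_mul_gaussSum_pow_orderOf_sub_one hχ1 hψ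

theorem jacobiSum_mul_jacobiSum_inv_of_charZero [CharZero R] {φ : MulChar F R} (hχ : χ ≠ 1)
    (hφ : φ ≠ 1) (hχφ : χ * φ ≠ 1) : jacobiSum χ φ * jacobiSum χ⁻¹ φ⁻¹ = Fintype.card F := by
  let ι := algebraMap R (FractionRing R)
  have hι : Function.Injective ι := IsFractionRing.injective R (FractionRing R)
  have : CharZero (FractionRing R) := charZero_of_injective_algebraMap hι
  have hchar : ringChar (FractionRing R) ≠ ringChar F := by
    rw [ringChar.eq_zero]
    exact (CharP.ringChar_ne_zero_of_finite F).symm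
  apply hι
  rw [map_mul, ← jacobiSum_ringHomComp, ← jacobiSum_ringHomComp, ← MulChar.ringHomComp_inv,
    ← MulChar.ringHomComp_inv, map_natCast]
  apply jacobiSum_mul_jacobiSum_inv hchar
  · exact (MulChar.ringHomComp_ne_one_iff hι).mpr hχ
  · exact (MulChar.ringHomComp_ne_one_iff hι).mpr hφ
  · rw [← MulChar.ringHomComp_mul]
    exact (MulChar.ringHomComp_ne_one_iff hι).mpr hχφ

theorem jacobiSum_mul_jacobiSum_sq_of_orderOf_eq_three [CharZero R] (hχ : orderOf χ = 3) :
    jacobiSum χ χ * jacobiSum (χ ^ 2) (χ ^ 2) = Fintype.card F := by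
  have hχ1 : χ ≠ 1 := by rintro rfl; simp at hχ
  have hχχ : χ * χ ≠ 1 := pow_two χ ▸ pow_ne_one_of_lt_orderOf two_ne_zero (by lia)
  have hχ3 : χ ^ 3 = 1 := hχ ▸ pow_orderOf_eq_one χ
  rw [pow_succ'] at hχ3
  rw [← inv_eq_of_mul_eq_one_right hχ3]
  exact jacobiSum_mul_jacobiSum_inv_of_charZero hχ1 hχ1 hχχ

theorem exists_two_mul_jacobiSum_eq [CharZero R] (hχ : orderOf χ = 3) {ω : R}
    (hω : IsPrimitiveRoot ω 3) :
    ∃ L M : ℤ, 2 * jacobiSum χ χ = L - 3 * (2 * ω + 1) * M ∧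
      2 * jacobiSum (χ ^ 2) (χ ^ 2) = L + 3 * (2 * ω + 1) * M := by
  have hχ3 : χ ^ 3 = 1 := hχ ▸ pow_orderOf_eq_one χ
  have hω2 := sq_add_self_add_one_eq_zero hω
  obtain ⟨N, hN⟩ := exists_jacobiSum_pow_eq_sum hω hχ3
  have hJ : jacobiSum χ χ = N 0 + ω * N 1 + ω ^ 2 * N 2 := by
    simpa [sum_range_succ] using hN 1
  have hJ' : jacobiSum (χ ^ 2) (χ ^ 2) = N 0 + ω ^ 2 * N 1 + ω ^ 4 * N 2 := by
    simpa [sum_range_succ] using hN 2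
  obtain ⟨z, hz, hJz⟩ := exists_jacobiSum_eq_neg_one_add (by norm_num) hχ3 hχ3
    (hχ ▸ χ.orderOf_dvd_card_sub_one) hω
  obtain ⟨c, d, rfl⟩ := exists_eq_add_mul_of_mem_adjoin hω2 hz
  have hdiv : N 1 - N 2 = 3 * (d - c) := by
    apply right_eq_of_int_add_mul_eq hω2 (a := N 0 - N 2) (c := 3 * d - 1)
    push_cast
    linear_combination hJz - hJ + (c + d * ω - 3 * d - N 2 : R) * hω2
  have hdiv : (N 1 - N 2 : R) = 3 * (d - c) := by exact_mod_cast hdiv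
  refine ⟨2 * N 0 - N 1 - N 2, c - d, ?_, ?_⟩ <;> push_cast
  · rw [hJ]
    linear_combination (2 * ω + 1) * hdiv + 2 * N 2 * hω2
  · rw [hJ']
    grind

end MulChar

section GaussPeriod

open scoped Classical in
/-- The Gaussian period of `ψ` over the coset `{x | χ x = c}` of the kernel of `χ`. -/
noncomputable def gaussPeriod {F R : Type*} [CommRing F] [Fintype F] [CommRing R]
    (χ : MulChar F R) (ψ : AddChar F R) (c : R) : R :=
  ∑ x with χ x = c, ψ x

theorem frobenius_map_gaussPeriod {F R K : Type*} [Field F] [Fintype F] [CommRing R] [CommRing K]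
    (f : R →+* K) (q : ℕ) [Fact q.Prime] [CharP K q] (hq : (q : F) ≠ 0) (χ : MulChar F R)
    (ψ : AddChar F R) (c : R) :
    frobenius K q (f (gaussPeriod χ ψ c)) = f (gaussPeriod χ ψ (c * χ q)) := by
  classical
  simp only [gaussPeriod, map_sum]
  refine sum_bij' (fun x _ ↦ x * q) (fun x _ ↦ x / q) ?_ ?_ ?_ ?_ ?_
  · intro x hx
    simp_all
  · intro x hx
    simp only [mem_filter, mem_univ, true_and] at hx ⊢
    apply (hq.isUnit.map χ).mul_right_cancel
    rw [← map_mul, div_mul_cancel₀ _ hq, hx]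
  · exact fun x _ ↦ mul_div_cancel_right₀ x hq
  · exact fun x _ ↦ div_mul_cancel₀ x hq
  · intro x _
    rw [frobenius_def, ← map_pow, ← AddChar.map_nsmul_eq_pow, nsmul_eq_mul, mul_comm]

variable {F R : Type*} [Field F] [Fintype F] [CommRing R] [IsDomain R] {χ : MulChar F R}

theorem gaussSum_pow_eq_sum_gaussPeriod {n : ℕ} [NeZero n] {ζ : R} (hζ : IsPrimitiveRoot ζ n)
    (hχ : χ ^ n = 1) (ψ : AddChar F R) (j : ℕ) :
    gaussSum (χ ^ j) ψ = ∑ k ∈ range n, ζ ^ (j * k) * gaussPeriod χ ψ (ζ ^ k) :=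
  sum_mulChar_pow_mul_eq_sum_fiber hζ hχ j (fun x ↦ x) ψ

theorem exists_isCubicPeriodTriple_gaussPeriod [CharZero R] (hχ : orderOf χ = 3)
    {ψ : AddChar F R} (hψ : ψ.IsPrimitive) {ω : R} (hω : IsPrimitiveRoot ω 3) :
    ∃ L M : ℤ, (4 * Fintype.card F : ℤ) = L ^ 2 + 27 * M ^ 2 ∧
      IsCubicPeriodTriple (Fintype.card F) L M
        (gaussPeriod χ ψ 1) (gaussPeriod χ ψ ω) (gaussPeriod χ ψ (ω ^ 2)) := by
  have hω2 := sq_add_self_add_one_eq_zero hω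
  have hχ2 : orderOf (χ ^ 2) = 3 := by
    rw [Nat.Coprime.orderOf_pow (hχ ▸ by norm_num), hχ]
  have hψ1 : ψ ≠ 1 := by
    rintro rfl
    exact hψ one_ne_zero (AddChar.mulShift_one 1)
  have gaussSum_eq (j : ℕ) : gaussSum (χ ^ j) ψ =
      gaussPeriod χ ψ 1 + ω ^ j * gaussPeriod χ ψ ω + ω ^ (j * 2) * gaussPeriod χ ψ (ω ^ 2) := by
    simpa [sum_range_succ] using
      gaussSum_pow_eq_sum_gaussPeriod hω (hχ ▸ pow_orderOf_eq_one χ) ψ j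
  obtain ⟨L, M, hJ, hJ'⟩ := exists_two_mul_jacobiSum_eq hχ hω
  have hg := gaussSum_pow_three_of_orderOf_eq_three hχ hψ
  have hg' := gaussSum_pow_three_of_orderOf_eq_three hχ2 hψ
  have hgg := gaussSum_mul_gaussSum_sq_of_orderOf_eq_three hχ hψ
  refine ⟨L, M, ?_, .of_resolvents (g := gaussSum χ ψ) (g' := gaussSum (χ ^ 2) ψ)
    (OfNat.ofNat_ne_zero 3) hω2 ?_ ?_ ?_ hgg ?_ ?_⟩
  · have : (4 * Fintype.card F : R) = L ^ 2 + 27 * M ^ 2 := by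
      rw [← jacobiSum_mul_jacobiSum_sq_of_orderOf_eq_three hχ]
      linear_combination 2 * jacobiSum (χ ^ 2) (χ ^ 2) * hJ +
        (L - 3 * (2 * ω + 1) * M) * hJ' - 36 * (M : R) ^ 2 * hω2
    exact_mod_cast this
  · simpa [gaussSum_one_left hψ1] using (gaussSum_eq 0).symm
  · simpa using gaussSum_eq 1
  · rw [gaussSum_eq 2]
    grind
  · apply mul_left_cancel₀ two_ne_zero
    rw [hg, hg']
    linear_combination (Fintype.card F : R) * (hJ + hJ')
  · apply mul_left_cancel₀ two_ne_zero
    rw [hg, hg']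
    linear_combination (Fintype.card F : R) * (hJ - hJ')

end GaussPeriod

theorem exists_isMaximal_charP_quotient (R : Type*) [CommRing R]
    [Algebra.IsIntegral ℤ R] [FaithfulSMul ℤ R] (q : ℕ) [Fact q.Prime] :
    ∃ Q : Ideal R, Q.IsMaximal ∧ CharP (R ⧸ Q) q := by
  have hmax : (Ideal.span {(q : ℤ)}).IsMaximal :=
    PrincipalIdealRing.isMaximal_of_irreducible
      (Nat.prime_iff_prime_int.mp Fact.out).irreducible
  obtain ⟨Q, hQ, hover⟩ :=
    Ideal.exists_maximal_ideal_liesOver_of_isIntegral (S := R) (Ideal.span {(q : ℤ)})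
  have hmem : (q : ℤ) ∈ Q.under ℤ := hover.over ▸ Ideal.mem_span_singleton_self _
  refine ⟨Q, hQ, (CharP.charP_iff_prime_eq_zero Fact.out).mpr ?_⟩
  simpa using Ideal.Quotient.eq_zero_iff_mem.mpr (Ideal.mem_comap.mp hmem)

section CubicCharacter

variable {p q : ℕ} [Fact p.Prime] {R K : Type*} [CommRing R] [IsDomain R]
  [CharZero R] [Field K] [CharP K q] {χ : MulChar (ZMod p) R} {ψ : AddChar (ZMod p) R} {L M : ℤ}

theorem exists_isCubicPeriodTriple_of_four_mul_eq (f : R →+* K) (hχ : orderOf χ = 3)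
    (hψ : ψ.IsPrimitive) {ω : R} (hω : IsPrimitiveRoot ω 3)
    (h : (4 * p : ℤ) = L ^ 2 + 27 * M ^ 2) :
    ∃ L' M' : ℤ, ((L' : K) = 0 ↔ (q : ℤ) ∣ L) ∧ ((M' : K) = 0 ↔ (q : ℤ) ∣ M) ∧
      IsCubicPeriodTriple p L' M' (f (gaussPeriod χ ψ 1)) (f (gaussPeriod χ ψ ω))
        (f (gaussPeriod χ ψ (ω ^ 2))) := by
  obtain ⟨L', M', h', triple⟩ := exists_isCubicPeriodTriple_gaussPeriod hχ hψ hω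
  rw [ZMod.card] at h' triple
  obtain ⟨hL, hM⟩ := natAbs_eq_of_mul_prime_eq_sq_add_mul_sq
    (Nat.prime_iff_prime_int.mp Fact.out) four_ne_zero (by norm_num) h' h
  refine ⟨L', M', ?_, ?_, triple.map f⟩
  · rw [CharP.intCast_eq_zero_iff K q, Int.natCast_dvd, Int.natCast_dvd, hL]
  · rw [CharP.intCast_eq_zero_iff K q, Int.natCast_dvd, Int.natCast_dvd, hM]

variable [Fact q.Prime]

theorem dvd_or_dvd_of_mulChar_eq_one (hq : q ∈ ({2, 3, 5, 7} : Finset ℕ)) (hpq : p ≠ q)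
    (f : R →+* K) (hχ : orderOf χ = 3) (hψ : ψ.IsPrimitive) {ω : R} (hω : IsPrimitiveRoot ω 3)
    (h : (4 * p : ℤ) = L ^ 2 + 27 * M ^ 2) (hχq : χ q = 1) : (q : ℤ) ∣ L ∨ (q : ℤ) ∣ M := by
  obtain ⟨L', M', hL, hM, triple⟩ := exists_isCubicPeriodTriple_of_four_mul_eq f hχ hψ hω h
  have hq0 : (q : ZMod p) ≠ 0 := CharP.cast_ne_zero_of_ne_of_prime _ Fact.out hpq
  have hp0 : (p : K) ≠ 0 := CharP.cast_ne_zero_of_ne_of_prime _ Fact.out hpq.symm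
  have frobenius_fixes (c : R) :
      frobenius K q (f (gaussPeriod χ ψ c)) = f (gaussPeriod χ ψ c) := by
    rw [frobenius_map_gaussPeriod f q hq0, hχq, mul_one]
  rw [← hL, ← hM]
  exact triple.eq_zero_or_eq_zero_of_frobenius_eq hq hp0
    (frobenius_fixes _) (frobenius_fixes _) (frobenius_fixes _)

theorem mulChar_eq_one_of_dvd_or_dvd (hpq : p ≠ q) (f : R →+* K) (hχ : orderOf χ = 3)
    (hψ : ψ.IsPrimitive) (h : (4 * p : ℤ) = L ^ 2 + 27 * M ^ 2)
    (hdvd : (q : ℤ) ∣ L ∨ (q : ℤ) ∣ M) : χ q = 1 := by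
  have hq0 : (q : ZMod p) ≠ 0 := CharP.cast_ne_zero_of_ne_of_prime _ Fact.out hpq
  have hp0 : (p : K) ≠ 0 := CharP.cast_ne_zero_of_ne_of_prime _ Fact.out hpq.symm
  by_contra hχq
  have hω3 : χ q ^ 3 = 1 := by
    rw [← hχ, ← MulChar.pow_apply' _ χ.orderOf_pos.ne', pow_orderOf_eq_one,
      MulChar.one_apply hq0.isUnit]
  have hω : IsPrimitiveRoot (χ q) 3 :=
    IsPrimitiveRoot.iff_orderOf.mpr (orderOf_eq_prime hω3 hχq)
  obtain ⟨L', M', hL, hM, triple⟩ := exists_isCubicPeriodTriple_of_four_mul_eq f hχ hψ hω h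
  have frobenius_maps {c d : R} (hcd : c * χ q = d) :
      frobenius K q (f (gaussPeriod χ ψ c)) = f (gaussPeriod χ ψ d) := by
    rw [frobenius_map_gaussPeriod f q hq0, hcd]
  have hne := triple.ne_zero_of_cycle hp0
    (frobenius_maps (one_mul _)) (frobenius_maps (pow_two _).symm)
    (frobenius_maps ((pow_succ _ 2).symm.trans hω3))
  exact hdvd.elim (hne.1 ∘ hL.mpr) (hne.2 ∘ hM.mpr)

end CubicCharacter

theorem exists_int_pow_modEq_iff {n m : ℕ} {a : ℤ} :
    (∃ x : ℤ, x ^ n ≡ a [ZMOD m]) ↔ ∃ x : ZMod m, x ^ n = a := by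
  simp only [← ZMod.intCast_eq_intCast_iff, Int.cast_pow, ZMod.intCast_surjective.exists]

/-- For `q ∈ {2, 3, 5, 7}` and a prime `p ≡ 1 (mod 3)`, `p ≠ q`, with `4p = L² + 27M²`,
`q` is a cubic residue mod `p` iff `q ∣ L` or `q ∣ M`. -/
theorem small_q_cubic_residue (q p : ℕ) (hq : q ∈ ({2, 3, 5, 7} : Finset ℕ))
    (hp : p.Prime) (hp3 : p % 3 = 1) (hpq : p ≠ q)
    (L M : ℤ) (h : (4 * p : ℤ) = L ^ 2 + 27 * M ^ 2) :
    (∃ x : ℤ, x ^ 3 ≡ (q : ℤ) [ZMOD (p : ℤ)]) ↔ ((q : ℤ) ∣ L ∨ (q : ℤ) ∣ M) := by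
  have : Fact p.Prime := ⟨hp⟩
  have : Fact q.Prime := ⟨by
    simp only [mem_insert, mem_singleton] at hq
    rcases hq with rfl | rfl | rfl | rfl <;> norm_num⟩
  have hpos : 0 < 3 * p := Nat.mul_pos three_pos hp.pos
  have : NeZero (3 * p) := ⟨hpos.ne'⟩
  have hζ := (Complex.isPrimitiveRoot_exp (3 * p) hpos.ne').toInteger_isPrimitiveRoot
  have hω := hζ.pow hpos (mul_comm 3 p)
  have hψ := AddChar.zmodChar_primitive_of_primitive_root p (hζ.pow hpos rfl)
  obtain ⟨χ, hχ⟩ := MulChar.exists_mulChar_orderOf (ZMod p) (by rw [ZMod.card]; lia) hω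
  obtain ⟨Q, _, _⟩ := exists_isMaximal_charP_quotient (NumberField.RingOfIntegers ℂ) q
  let _ : Field (_ ⧸ Q) := Ideal.Quotient.field Q
  have cube_iff : (∃ x : ZMod p, x ^ 3 = q) ↔ χ q = 1 :=
    hχ ▸ exists_pow_orderOf_eq_iff_mulChar_eq_one χ
      (CharP.cast_ne_zero_of_ne_of_prime _ Fact.out hpq)
  rw [exists_int_pow_modEq_iff, Int.cast_natCast, cube_iff]
  exact ⟨dvd_or_dvd_of_mulChar_eq_one hq hpq (Ideal.Quotient.mk Q) hχ hψ hω h,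
    mulChar_eq_one_of_dvd_or_dvd hpq (Ideal.Quotient.mk Q) hχ hψ h⟩
end

section
/- Let p be a prime with p ≡ 1 (mod 3) and let L, M be integers with 4p = L² + 27M². Then p does not divide 6M, and the element r := −(L + 3M)·(6M)⁻¹ of ℤ/pℤ satisfies r² + r + 1 = 0; in particular r is a primitive cube root of unity modulo p. -/
/-!
The polynomial `X² + X + 1` has discriminant `-3`, and `L² + 27M² = 0` makes `L` a square root of
`-3 · (3M)²`. Completing the square, the root with `2r + 1 = -L / (3M)` is
`r = -(L + 3M) / (6M)`.
-/

section CommRing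

variable {R : Type*} [CommRing R]

theorem sq_add_self_add_one_mul_sq_eq {r L M : R} (hr : r * (6 * M) = -(L + 3 * M)) :
    (r ^ 2 + r + 1) * (6 * M) ^ 2 = L ^ 2 + 27 * M ^ 2 := by
  linear_combination (r * (6 * M) - (L + 3 * M) + 6 * M) * hr

theorem sq_add_self_add_one_eq_zero_of_mul_eq [NoZeroDivisors R] {r L M : R} (hM : 6 * M ≠ 0)
    (hLM : L ^ 2 + 27 * M ^ 2 = 0) (hr : r * (6 * M) = -(L + 3 * M)) :
    r ^ 2 + r + 1 = 0 := by
  have hmul : (r ^ 2 + r + 1) * (6 * M) ^ 2 = 0 := (sq_add_self_add_one_mul_sq_eq hr).trans hLM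
  exact (mul_eq_zero.mp hmul).resolve_right (pow_ne_zero 2 hM)

theorem isPrimitiveRoot_three_iff [IsDomain R] {r : R} (h3 : (3 : R) ≠ 0) :
    IsPrimitiveRoot r 3 ↔ r ^ 2 + r + 1 = 0 := by
  have : NeZero ((3 : ℕ) : R) := ⟨mod_cast h3⟩
  rw [← Polynomial.isRoot_cyclotomic_iff, Polynomial.cyclotomic_three]
  simp

theorem not_dvd_of_mul_eq_sq_add_mul_sq [IsDomain R] {p c d x y : R} (hp : Prime p)
    (hc : ¬ p ∣ c) (h : c * p = x ^ 2 + d * y ^ 2) : ¬ p ∣ y := by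
  intro hy
  have hx : p ∣ x := by
    have hdy : p ∣ d * y ^ 2 := (dvd_pow hy two_ne_zero).mul_left d
    exact hp.dvd_of_dvd_pow ((dvd_add_left hdy).mp (h ▸ dvd_mul_left p c))
  have hsq : p * p ∣ c * p := by
    rw [h, ← sq]
    exact dvd_add (pow_dvd_pow_of_dvd hx 2) ((pow_dvd_pow_of_dvd hy 2).mul_left d)
  exact hc ((mul_dvd_mul_iff_right hp.ne_zero).mp hsq)

end CommRing

theorem seven_le_of_prime_of_mod_three_eq_one {p : ℕ} (hp : p.Prime) (hp3 : p % 3 = 1) :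
    7 ≤ p := by
  have h4 : p ≠ 4 := by
    rintro rfl
    norm_num at hp
  have h2 := hp.two_le
  lia

/-- For a prime `p ≡ 1 (mod 3)` with `4p = L² + 27M²`, `p ∤ 6M`, and
`r := −(L+3M)·(6M)⁻¹` in `ZMod p` satisfies `r² + r + 1 = 0`; in particular
`r` is a primitive cube root of unity modulo `p`. -/
theorem primitive_cube_root_formula (p : ℕ) (hp : p.Prime) (hp3 : p % 3 = 1)
    (L M : ℤ) (h : (4 * p : ℤ) = L ^ 2 + 27 * M ^ 2) :
    ¬ ((p : ℤ) ∣ 6 * M) ∧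
      ∀ r : ZMod p, r = ((-(L + 3 * M) : ℤ) : ZMod p) * (((6 * M : ℤ) : ZMod p))⁻¹ →
        r ^ 2 + r + 1 = 0 ∧ r ^ 3 = 1 ∧ r ≠ 1 := by
  have : Fact p.Prime := ⟨hp⟩
  have hpZ : Prime (p : ℤ) := Nat.prime_iff_prime_int.mp hp
  have h7 : 7 ≤ p := seven_le_of_prime_of_mod_three_eq_one hp hp3
  have h4 : ¬ (p : ℤ) ∣ 4 := mod_cast Nat.not_dvd_of_pos_of_lt four_pos (by lia)
  have h6 : ¬ (p : ℤ) ∣ 6 := mod_cast Nat.not_dvd_of_pos_of_lt (by norm_num) (by lia)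
  have h6M : ¬ (p : ℤ) ∣ 6 * M := hpZ.not_dvd_mul h6 (not_dvd_of_mul_eq_sq_add_mul_sq hpZ h4 h)
  refine ⟨h6M, fun r hr ↦ ?_⟩
  have hM : (6 * M : ZMod p) ≠ 0 := by
    exact_mod_cast mt (ZMod.intCast_zmod_eq_zero_iff_dvd _ p).mp h6M
  have hLM : (L ^ 2 + 27 * M ^ 2 : ZMod p) = 0 := by
    simpa using (congrArg (Int.cast : ℤ → ZMod p) h).symm
  have hrM : r * (6 * M) = -(L + 3 * M) := by
    push_cast at hr
    rwa [eq_mul_inv_iff_mul_eq₀ hM] at hr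
  have hroot : r ^ 2 + r + 1 = 0 := sq_add_self_add_one_eq_zero_of_mul_eq hM hLM hrM
  have h3 : (3 : ZMod p) ≠ 0 := fun h3 ↦ hM (by linear_combination 2 * M * h3)
  have hprim : IsPrimitiveRoot r 3 := (isPrimitiveRoot_three_iff h3).mpr hroot
  exact ⟨hroot, hprim.pow_eq_one, hprim.ne_one (by norm_num)⟩
end

section
/- Let p be a prime with p ≡ 1 (mod 3) and let L, M be integers with 4p = L² + 27M². Then 3^{(p−1)/3} ≡ −(L + 3M)·(6M)⁻¹ (mod p) if and only if L ≡ −M (mod 3). -/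
/-!
Let `χ` be the cubic residue character of `F = 𝔽_p` with values in `ℤ[ω]`, and let `J = J(χ, χ)`,
`G = ∑ χ(x) [x]`, `H = ∑ χ⁻¹(x) [x]`, `N = ∑ [x]` in the group algebra `ℤ[ω][F]` of the additive
group of `F`. With a bar for conjugation, `G² = J H`, `H² = J̄ G` and `G H = p - N`, so the
coefficient of `(G - H)³` at `[1]` is `J̄ - J`. Write `im` for the coefficient of `ω`. As `χ⁻¹` is
the conjugate of `χ`, also `G - H = √-3 β` with `β = ∑ im χ(x) [x]`; hence `im J` is three times
the coefficient of `β³` at `[1]`, which modulo `3` is `im χ(1/3)` by Frobenius. So `im J` modulo `9`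
determines whether `χ(3) = ω`. Finally `J` is the primary prime of norm `p` killed by the reduction
`ℤ[ω] → 𝔽_p` that defines `χ`, and this prime can be read off from `(L, M)`.
-/

open scoped AddMonoidAlgebra QuadraticAlgebra

/-! ### Eisenstein integers -/

/-- The ring `ℤ[ω]` of Eisenstein integers, where `ω² = -1 - ω`; the element `a + bω` has `re = a`
and `im = b`, so these are coordinates in the basis `1, ω` and not real and imaginary parts. -/
abbrev EisensteinInt : Type := QuadraticAlgebra ℤ (-1) (-1)

namespace EisensteinInt

lemma norm_eq (z : EisensteinInt) : z.norm = z.re ^ 2 - z.re * z.im + z.im ^ 2 := by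
  rw [QuadraticAlgebra.norm_def]; ring

lemma four_mul_norm (z : EisensteinInt) : 4 * z.norm = (2 * z.re - z.im) ^ 2 + 3 * z.im ^ 2 := by
  rw [norm_eq]; ring

lemma norm_nonneg (z : EisensteinInt) : 0 ≤ z.norm := by
  linarith [four_mul_norm z, sq_nonneg (2 * z.re - z.im), sq_nonneg z.im]

lemma norm_eq_zero {z : EisensteinInt} : z.norm = 0 ↔ z = 0 := by
  refine ⟨fun h ↦ ?_, fun h ↦ by rw [h, QuadraticAlgebra.norm_zero]⟩
  have hsum := four_mul_norm z
  have him : z.im = 0 := by nlinarith [sq_nonneg (2 * z.re - z.im)]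
  have hre : z.re = 0 := by rw [norm_eq, him] at h; simpa using h
  exact QuadraticAlgebra.ext hre him

instance : IsDomain EisensteinInt :=
  have : NoZeroDivisors EisensteinInt :=
    ⟨fun {z w} h ↦ by
      have := congrArg QuadraticAlgebra.norm h
      rwa [map_mul, QuadraticAlgebra.norm_zero, mul_eq_zero, norm_eq_zero, norm_eq_zero] at this⟩
  NoZeroDivisors.to_isDomain _

lemma mul_star_eq_norm (z : EisensteinInt) : z * star z = (z.norm : EisensteinInt) :=
  (QuadraticAlgebra.algebraMap_norm_eq_mul_star z).symm

lemma norm_eq_one_of_isUnit {z : EisensteinInt} (hz : IsUnit z) : z.norm = 1 :=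
  (Int.isUnit_iff.mp (QuadraticAlgebra.isUnit_iff_norm_isUnit.mp hz)).resolve_right
    (by linarith [norm_nonneg z])

lemma omega_sq_add_omega_add_one : (ω : EisensteinInt) ^ 2 + ω + 1 = 0 := by
  ext <;> simp [sq]

lemma sub_star_eq (z : EisensteinInt) : z - star z = (z.im : EisensteinInt) * (2 * ω + 1) := by
  ext <;> simp [sub_eq_add_neg, mul_two]

lemma two_mul_omega_add_one_sq : (2 * ω + 1 : EisensteinInt) ^ 2 = -3 := by
  linear_combination 4 * omega_sq_add_omega_add_one

lemma eq_re_add_im_mul_omega (z : EisensteinInt) :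
    z = (z.re : EisensteinInt) + (z.im : EisensteinInt) * ω := by
  ext <;> simp

lemma map_eq {R : Type*} [Ring R] (φ : EisensteinInt →+* R) (z : EisensteinInt) :
    φ z = (z.re : R) + (z.im : R) * φ ω := by
  conv_lhs => rw [eq_re_add_im_mul_omega z]
  simp

lemma exists_ringHom_omega_eq {R : Type*} [CommRing R] {r : R} (hr : r ^ 2 + r + 1 = 0) :
    ∃ φ : EisensteinInt →+* R, φ ω = r :=
  ⟨(QuadraticAlgebra.lift (R := ℤ) ⟨r, by simp; linear_combination hr⟩ : EisensteinInt →ₐ[ℤ] R),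
    by simp [QuadraticAlgebra.lift]⟩

lemma isPrimitiveRoot_map_omega {R : Type*} [CommRing R] [IsDomain R] (h3 : (3 : R) ≠ 0)
    (φ : EisensteinInt →+* R) : IsPrimitiveRoot (φ ω) 3 := by
  have : NeZero ((3 : ℕ) : R) := ⟨mod_cast h3⟩
  rw [← Polynomial.isRoot_cyclotomic_iff, Polynomial.cyclotomic_three]
  simpa using congrArg φ omega_sq_add_omega_add_one

lemma isPrimitiveRoot_omega : IsPrimitiveRoot (ω : EisensteinInt) 3 :=
  isPrimitiveRoot_map_omega (by norm_num) (RingHom.id EisensteinInt)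

/-- An Eisenstein integer is primary if it is congruent to `-1` modulo `3` (the normalization of
Ireland and Rosen); this selects one generator of each ideal prime to `3`. -/
def IsPrimary (z : EisensteinInt) : Prop := 3 ∣ z + 1

lemma isPrimary_iff {z : EisensteinInt} : IsPrimary z ↔ 3 ∣ z.re + 1 ∧ 3 ∣ z.im := by
  have h : (3 : EisensteinInt) = algebraMap ℤ EisensteinInt 3 := by simp
  rw [IsPrimary, h, QuadraticAlgebra.algebraMap_dvd_iff]
  simp

lemma isPrimary_or_isPrimary_neg {z : EisensteinInt} (hnorm : ¬ 3 ∣ z.norm) (him : 3 ∣ z.im) :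
    IsPrimary z ∨ IsPrimary (-z) := by
  have hre : ¬ 3 ∣ z.re := fun hre ↦ hnorm <| by
    rw [norm_eq]
    exact dvd_add (dvd_sub (dvd_pow hre two_ne_zero) (hre.mul_right _)) (dvd_pow him two_ne_zero)
  simp only [isPrimary_iff, QuadraticAlgebra.re_neg, QuadraticAlgebra.im_neg]
  omega

lemma eq_one_of_norm_eq_one {t : EisensteinInt} (hnorm : t.norm = 1) (h3 : 3 ∣ t - 1) : t = 1 := by
  obtain ⟨s, hs⟩ := h3
  have hre : t.re = 1 + 3 * s.re := by
    linear_combination (by simpa using congrArg QuadraticAlgebra.re hs : t.re - 1 = 3 * s.re)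
  have him : t.im = 3 * s.im := by simpa using congrArg QuadraticAlgebra.im hs
  have hsum := four_mul_norm t
  have hs_im : s.im = 0 := by
    rw [hnorm, him] at hsum
    nlinarith [sq_nonneg (2 * t.re - 3 * s.im)]
  rw [hs_im, mul_zero] at him
  have hsq : t.re ^ 2 = 1 := by rw [hnorm, him] at hsum; linarith
  rcases sq_eq_one_iff.mp hsq with h | h
  · exact QuadraticAlgebra.ext h him
  · omega

lemma eq_one_of_isPrimary_mul {z t : EisensteinInt} (hz : IsPrimary z) (hzt : IsPrimary (z * t))
    (ht : t.norm = 1) : t = 1 := by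
  refine eq_one_of_norm_eq_one ht ?_
  have := dvd_sub (hz.mul_right t) hzt
  rwa [show (z + 1) * t - (z * t + 1) = t - 1 by ring] at this

section PrimeField

variable {p : ℕ} [Fact p.Prime]

lemma natCast_dvd_of_map_eq_zero (h3 : (3 : ZMod p) ≠ 0) (φ : EisensteinInt →+* ZMod p)
    {w : EisensteinInt} (hw : φ w = 0) (hw' : φ (star w) = 0) : (p : EisensteinInt) ∣ w := by
  have him : (w.im : ZMod p) = 0 := by
    have hsq : φ (2 * ω + 1) ^ 2 = -3 := by
      rw [← map_pow, two_mul_omega_add_one_sq, map_neg, map_ofNat]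
    have hne : φ (2 * ω + 1) ≠ 0 := fun h ↦ h3 (by rw [h] at hsq; linear_combination hsq)
    have := congrArg φ (sub_star_eq w)
    rw [map_sub, hw, hw', sub_zero, map_mul, map_intCast] at this
    exact (mul_eq_zero.mp this.symm).resolve_right hne
  have hre : (w.re : ZMod p) = 0 := by simpa [map_eq φ w, him] using hw
  rw [ZMod.intCast_zmod_eq_zero_iff_dvd] at him hre
  have h : (p : EisensteinInt) = algebraMap ℤ EisensteinInt p := by simp
  rw [h, QuadraticAlgebra.algebraMap_dvd_iff]
  exact ⟨hre, him⟩

lemma dvd_of_map_eq_zero (h3 : (3 : ZMod p) ≠ 0) (φ : EisensteinInt →+* ZMod p)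
    {π z : EisensteinInt} (hnorm : π.norm = p) (hπ : φ π = 0) (hz : φ z = 0) : π ∣ z := by
  have hπ_star : π * star π = p := by rw [mul_star_eq_norm, hnorm, Int.cast_natCast]
  have hp : (p : EisensteinInt) ≠ 0 := Nat.cast_ne_zero.mpr (Fact.out : p.Prime).ne_zero
  obtain ⟨t, ht⟩ := natCast_dvd_of_map_eq_zero h3 φ (w := z * star π) (by simp [hz]) (by simp [hπ])
  refine ⟨t, mul_left_cancel₀ hp ?_⟩
  linear_combination π * ht - z * hπ_star

theorem eq_of_isPrimary_of_map_eq_zero (h3 : (3 : ZMod p) ≠ 0) (φ : EisensteinInt →+* ZMod p)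
    {π π' : EisensteinInt} (hπ : IsPrimary π) (hπ' : IsPrimary π') (hnorm : π.norm = p)
    (hnorm' : π'.norm = p) (hφ : φ π = 0) (hφ' : φ π' = 0) : π = π' := by
  obtain ⟨t, rfl⟩ := dvd_of_map_eq_zero h3 φ hnorm hφ hφ'
  have hp : (p : ℤ) ≠ 0 := Nat.cast_ne_zero.mpr (Fact.out : p.Prime).ne_zero
  have ht : t.norm = 1 := by
    rw [map_mul, hnorm] at hnorm'
    exact (mul_eq_left₀ hp).mp hnorm'
  rw [eq_one_of_isPrimary_mul hπ hπ' ht, mul_one]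

lemma intCast_im_ne_zero {π : EisensteinInt} (hnorm : π.norm = p) : (π.im : ZMod p) ≠ 0 := by
  have hp := Nat.prime_iff_prime_int.mp (Fact.out : p.Prime)
  rw [Ne, ZMod.intCast_zmod_eq_zero_iff_dvd]
  rintro ⟨b, hb⟩
  have hnorm_eq := norm_eq π
  obtain ⟨a, ha⟩ : (p : ℤ) ∣ π.re := hp.dvd_of_dvd_pow (n := 2)
    ⟨1 + π.re * b - p * b ^ 2, by rw [hnorm, hb] at hnorm_eq; linear_combination -hnorm_eq⟩
  refine hp.not_isUnit (.of_mul_eq_one (a ^ 2 - a * b + b ^ 2) (mul_left_cancel₀ hp.ne_zero ?_))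
  rw [hnorm, ha, hb] at hnorm_eq
  linear_combination -hnorm_eq

lemma exists_ringHom_map_eq_zero {π : EisensteinInt} (hnorm : π.norm = p) :
    ∃ φ : EisensteinInt →+* ZMod p, φ ω = -π.re / π.im ∧ φ π = 0 := by
  have him := intCast_im_ne_zero hnorm
  have hquad : (π.re : ZMod p) ^ 2 - π.re * π.im + π.im ^ 2 = 0 := by
    have := congrArg (Int.cast : ℤ → ZMod p) (norm_eq π)
    rw [hnorm] at this
    push_cast at this
    rw [← this, ZMod.natCast_self]
  obtain ⟨φ, hφ⟩ := exists_ringHom_omega_eq (r := -(π.re : ZMod p) / π.im) (by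
    field_simp; linear_combination hquad)
  refine ⟨φ, hφ, ?_⟩
  rw [map_eq, hφ, mul_div_cancel₀ _ him, add_neg_cancel]

end PrimeField

end EisensteinInt

/-! ### Multiplicative characters in the group algebra -/

section GroupAlgebra

/-- The element `∑ f(g) [g]` of the group algebra of a finite additive group. For a multiplicative
character `f` of a finite field this is the Gauss sum for the universal additive character. -/
noncomputable def groupAlgebraSum {G R : Type*} [Finite G] [Semiring R] (f : G → R) : R[G] :=
  .ofCoeff (Finsupp.equivFunOnFinite.symm f)

@[simp]
lemma coeff_groupAlgebraSum {G R : Type*} [Finite G] [Semiring R] (f : G → R) (g : G) :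
    (groupAlgebraSum f).coeff g = f g := rfl

lemma groupAlgebraSum_mul {G R : Type*} [AddCommGroup G] [Fintype G] [Semiring R] (f f' : G → R) :
    groupAlgebraSum f * groupAlgebraSum f' = groupAlgebraSum fun d ↦ ∑ g, f g * f' (d - g) := by
  classical
  ext d
  rw [AddMonoidAlgebra.coeff_mul]
  simp [Finsupp.sum_fintype, ← eq_sub_iff_add_eq']

lemma coeff_nsmul_pow_char {G R : Type*} [AddCommMonoid G] [CommRing R] (ℓ : ℕ) [Fact ℓ.Prime]
    [CharP R ℓ] (hG : Function.Injective fun g : G ↦ ℓ • g) (f : R[G]) (g : G) :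
    (f ^ ℓ).coeff (ℓ • g) = f.coeff g ^ ℓ := by
  classical
  have : CharP R[G] ℓ := charP_of_injective_algebraMap (FaithfulSMul.algebraMap_injective R R[G]) ℓ
  induction f using AddMonoidAlgebra.induction_linear with
  | zero => simp [(Fact.out : ℓ.Prime).ne_zero]
  | add x y hx hy => simp [add_pow_char, hx, hy]
  | single a r =>
    simp [AddMonoidAlgebra.single_pow, Finsupp.single_apply, hG.eq_iff,
      (Fact.out : ℓ.Prime).ne_zero]

lemma coeff_one_groupAlgebraSum_pow_modEq {F : Type*} [Field F] [Finite F] {ℓ : ℕ} [Fact ℓ.Prime]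
    (hℓ : (ℓ : F) ≠ 0) (f : F → ℤ) : (groupAlgebraSum f ^ ℓ).coeff 1 ≡ f (ℓ : F)⁻¹ [ZMOD ℓ] := by
  have hinj : Function.Injective fun x : F ↦ ℓ • x := fun x y h ↦
    mul_left_cancel₀ hℓ (by simpa using h)
  have h := coeff_nsmul_pow_char ℓ hinj
    (AddMonoidAlgebra.mapRingHom F (Int.castRingHom (ZMod ℓ)) (groupAlgebraSum f)) (ℓ : F)⁻¹
  rw [← map_pow, ZMod.pow_card] at h
  refine (ZMod.intCast_eq_intCast_iff _ _ ℓ).mp ?_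
  simpa [hℓ, -map_pow] using h

lemma groupAlgebraSum_mul_groupAlgebraSum_one {F R : Type*} [Field F] [Finite F] [CommRing R]
    [IsDomain R] {χ : MulChar F R} (hχ : χ ≠ 1) :
    groupAlgebraSum χ * groupAlgebraSum (1 : F → R) = 0 := by
  have := Fintype.ofFinite F
  rw [groupAlgebraSum_mul]
  ext d
  simp [MulChar.sum_eq_zero_of_ne_one hχ]

end GroupAlgebra

section MulChar

variable {F R : Type*} [Field F] [Fintype F] [CommRing R]

lemma sum_apply_mul_apply_zero_sub (χ ψ : MulChar F R) :
    ∑ x, χ x * ψ (0 - x) = ψ (-1) * ∑ x, (χ * ψ) x := by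
  rw [Finset.mul_sum]
  refine Finset.sum_congr rfl fun x _ ↦ ?_
  rw [zero_sub, neg_eq_neg_one_mul, map_mul, MulChar.mul_apply]
  ring

lemma sum_apply_mul_apply_sub (χ ψ : MulChar F R) {d : F} (hd : d ≠ 0) :
    ∑ x, χ x * ψ (d - x) = jacobiSum χ ψ * (χ * ψ) d := by
  rw [← Equiv.sum_comp (Equiv.mulLeft₀ d hd), jacobiSum, Finset.sum_mul]
  refine Finset.sum_congr rfl fun x _ ↦ ?_
  rw [Equiv.mulLeft₀_apply, show d - d * x = d * (1 - x) by ring, map_mul, map_mul,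
    MulChar.mul_apply]
  ring

variable [IsDomain R]

lemma groupAlgebraSum_mul_of_mul_ne_one {χ ψ : MulChar F R} (h : χ * ψ ≠ 1) :
    groupAlgebraSum χ * groupAlgebraSum ψ = jacobiSum χ ψ • groupAlgebraSum (χ * ψ) := by
  rw [groupAlgebraSum_mul]
  ext d
  simp only [coeff_groupAlgebraSum, AddMonoidAlgebra.coeff_smul, Finsupp.smul_apply, smul_eq_mul]
  rcases eq_or_ne d 0 with rfl | hd
  · rw [sum_apply_mul_apply_zero_sub, MulChar.sum_eq_zero_of_ne_one h, MulChar.map_zero, mul_zero,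
      mul_zero]
  · exact sum_apply_mul_apply_sub χ ψ hd

lemma groupAlgebraSum_mul_inv {χ : MulChar F R} (hχ : χ ≠ 1) :
    groupAlgebraSum χ * groupAlgebraSum (χ⁻¹ : MulChar F R) =
      χ (-1) • ((Fintype.card F : R[F]) - groupAlgebraSum 1) := by
  classical
  rw [groupAlgebraSum_mul]
  ext d
  rcases eq_or_ne d 0 with rfl | hd
  · rw [coeff_groupAlgebraSum, sum_apply_mul_apply_zero_sub, mul_inv_cancel,
      MulChar.sum_one_eq_card_units, Fintype.card_units, Nat.cast_sub Fintype.card_pos]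
    simp [AddMonoidAlgebra.natCast_def, MulChar.inv_apply']
  · simp [sum_apply_mul_apply_sub _ _ hd, jacobiSum_nontrivial_inv hχ, MulChar.one_apply hd.isUnit,
      AddMonoidAlgebra.natCast_def, hd.symm]

lemma groupAlgebraSum_mul_self {χ : MulChar F R} (hχ : χ ≠ 1) (hχ3 : χ ^ 3 = 1) :
    groupAlgebraSum χ * groupAlgebraSum χ =
      algebraMap R R[F] (jacobiSum χ χ) * groupAlgebraSum (χ⁻¹ : MulChar F R) := by
  have hsq : χ * χ = χ⁻¹ := eq_inv_of_mul_eq_one_left (by rw [← hχ3, pow_three'])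
  rw [groupAlgebraSum_mul_of_mul_ne_one (by rwa [hsq, inv_ne_one]), hsq, Algebra.smul_def]

lemma groupAlgebraSum_inv_mul_self {χ : MulChar F R} (hχ : χ ≠ 1) (hχ3 : χ ^ 3 = 1) :
    groupAlgebraSum (χ⁻¹ : MulChar F R) * groupAlgebraSum (χ⁻¹ : MulChar F R) =
      algebraMap R R[F] (jacobiSum χ⁻¹ χ⁻¹) * groupAlgebraSum χ := by
  simpa using groupAlgebraSum_mul_self (inv_ne_one.mpr hχ) (by rw [inv_pow, hχ3, inv_one])

lemma groupAlgebraSum_mul_inv_of_pow_three {χ : MulChar F R} (hχ : χ ≠ 1) (hχ3 : χ ^ 3 = 1) :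
    groupAlgebraSum χ * groupAlgebraSum (χ⁻¹ : MulChar F R) =
      (Fintype.card F : R[F]) - groupAlgebraSum 1 := by
  rw [groupAlgebraSum_mul_inv hχ, MulChar.val_neg_one_eq_one_of_odd_order (by decide) hχ3, one_smul]

lemma jacobiSum_self_mul_jacobiSum_inv {χ : MulChar F R} (hχ : χ ≠ 1) (hχ3 : χ ^ 3 = 1) :
    jacobiSum χ χ * jacobiSum χ⁻¹ χ⁻¹ = Fintype.card F := by
  have h : algebraMap R R[F] (jacobiSum χ χ * jacobiSum χ⁻¹ χ⁻¹) * groupAlgebraSum χ =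
      algebraMap R R[F] (Fintype.card F) * groupAlgebraSum χ := by
    rw [map_mul, map_natCast]
    linear_combination groupAlgebraSum χ * groupAlgebraSum_mul_inv_of_pow_three hχ hχ3 -
      groupAlgebraSum (χ⁻¹ : MulChar F R) * groupAlgebraSum_mul_self hχ hχ3 -
      algebraMap R R[F] (jacobiSum χ χ) * groupAlgebraSum_inv_mul_self hχ hχ3 -
      groupAlgebraSum_mul_groupAlgebraSum_one hχ
  simp_rw [← Algebra.smul_def] at h
  simpa using congrArg (fun f : R[F] ↦ f.coeff 1) h

lemma sub_groupAlgebraSum_inv_pow_three {χ : MulChar F R} (hχ : χ ≠ 1) (hχ3 : χ ^ 3 = 1) :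
    (groupAlgebraSum χ - groupAlgebraSum (χ⁻¹ : MulChar F R)) ^ 3 =
      algebraMap R R[F] (jacobiSum χ χ - jacobiSum χ⁻¹ χ⁻¹) *
          ((Fintype.card F : R[F]) - groupAlgebraSum 1) -
        algebraMap R R[F] (3 * Fintype.card F) *
          (groupAlgebraSum χ - groupAlgebraSum (χ⁻¹ : MulChar F R)) := by
  have hGG := groupAlgebraSum_mul_self hχ hχ3
  have hHH := groupAlgebraSum_inv_mul_self hχ hχ3
  have hGH := groupAlgebraSum_mul_inv_of_pow_three hχ hχ3
  have hGN := groupAlgebraSum_mul_groupAlgebraSum_one hχ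
  have hHN := groupAlgebraSum_mul_groupAlgebraSum_one (inv_ne_one.mpr hχ)
  rw [map_sub, map_mul, map_ofNat, map_natCast]
  set G := groupAlgebraSum χ
  set H := groupAlgebraSum (χ⁻¹ : MulChar F R)
  linear_combination G * hGG - H * hHH + 3 * (hGN - hHN) +
    (algebraMap R R[F] (jacobiSum χ χ) - algebraMap R R[F] (jacobiSum χ⁻¹ χ⁻¹) - 3 * (G - H)) * hGH

lemma coeff_one_sub_groupAlgebraSum_inv_pow_three {χ : MulChar F R} (hχ : χ ≠ 1) (hχ3 : χ ^ 3 = 1) :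
    ((groupAlgebraSum χ - groupAlgebraSum (χ⁻¹ : MulChar F R)) ^ 3).coeff 1 =
      jacobiSum χ⁻¹ χ⁻¹ - jacobiSum χ χ := by
  rw [sub_groupAlgebraSum_inv_pow_three hχ hχ3, ← Algebra.smul_def, ← Algebra.smul_def]
  simp [AddMonoidAlgebra.natCast_def]

end MulChar

lemma exists_mulChar_pow_eq_one_apply_eq {M R : Type*} [CommMonoid M] [Fintype M] [DecidableEq M]
    [CommRing R] {n : ℕ} (hn : n ≠ 0) (hcard : n ∣ Fintype.card Mˣ) {u : Mˣ}
    (hu : ∀ x, x ∈ Subgroup.zpowers u) {ζ : R} (hζ : ζ ^ n = 1) :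
    ∃ χ : MulChar M R, χ ^ n = 1 ∧ χ u = ζ := by
  have hmem : Units.ofPowEqOne ζ n hζ hn ∈ rootsOfUnity (Fintype.card Mˣ) R :=
    rootsOfUnity_le_of_dvd hcard (Units.pow_ofPowEqOne hζ hn)
  have hχu : MulChar.ofRootOfUnity hmem hu u = ζ := MulChar.ofRootOfUnity_spec hmem hu
  refine ⟨_, (MulChar.eq_iff hu _ _).mpr ?_, hχu⟩
  rw [MulChar.pow_apply_coe, MulChar.one_apply_coe, hχu, hζ]

lemma sum_eval_eq_zero_of_natDegree_lt {F : Type*} [Field F] [Fintype F] {f : Polynomial F}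
    (hf : f.natDegree < Fintype.card F - 1) : ∑ x, f.eval x = 0 := by
  simp_rw [Polynomial.eval_eq_sum_range]
  rw [Finset.sum_comm]
  refine Finset.sum_eq_zero fun i hi ↦ ?_
  rw [← Finset.mul_sum, FiniteField.sum_pow_lt_card_sub_one, mul_zero]
  exact (Finset.mem_range_succ_iff.mp hi).trans_lt hf

/-! ### Cubic characters with values in the Eisenstein integers -/

namespace EisensteinInt

section Jacobi

variable {F : Type*} [Field F]

lemma inv_apply_eq_star (χ : MulChar F EisensteinInt) (x : F) : χ⁻¹ x = star (χ x) := by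
  rcases eq_or_ne x 0 with rfl | hx
  · rw [MulChar.map_zero, MulChar.map_zero, star_zero]
  · have hu : IsUnit (χ x) := hx.isUnit.map χ
    have hstar : χ x * star (χ x) = 1 := by
      rw [mul_star_eq_norm, norm_eq_one_of_isUnit hu, Int.cast_one]
    rw [MulChar.inv_apply_eq_inv, ← mul_one (Ring.inverse _), ← hstar,
      Ring.inverse_mul_cancel_left _ _ hu]

lemma sub_groupAlgebraSum_inv_eq [Finite F] (χ : MulChar F EisensteinInt) :
    groupAlgebraSum χ - groupAlgebraSum (χ⁻¹ : MulChar F EisensteinInt) =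
      (2 * ω + 1 : EisensteinInt) •
        AddMonoidAlgebra.mapRingHom F (Int.castRingHom EisensteinInt)
          (groupAlgebraSum fun x ↦ (χ x).im) := by
  ext1
  ext1 x
  simp [inv_apply_eq_star, sub_star_eq, mul_comm]

variable [Fintype F]

lemma jacobiSum_inv_inv (χ ψ : MulChar F EisensteinInt) :
    jacobiSum χ⁻¹ ψ⁻¹ = star (jacobiSum χ ψ) := by
  simp [jacobiSum, inv_apply_eq_star]

lemma norm_jacobiSum {χ : MulChar F EisensteinInt} (hχ : χ ≠ 1) (hχ3 : χ ^ 3 = 1) :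
    (jacobiSum χ χ).norm = Fintype.card F := by
  have h := jacobiSum_self_mul_jacobiSum_inv hχ hχ3
  rw [jacobiSum_inv_inv, mul_star_eq_norm] at h
  exact_mod_cast h

lemma isPrimary_jacobiSum {χ : MulChar F EisensteinInt} (hχ3 : χ ^ 3 = 1)
    (hcard : 3 ∣ Fintype.card F - 1) : IsPrimary (jacobiSum χ χ) := by
  obtain ⟨z, -, hz⟩ := exists_jacobiSum_eq_neg_one_add (by norm_num) hχ3 hχ3 hcard
    isPrimitiveRoot_omega
  exact ⟨-(z * ω), by rw [hz]; linear_combination z * omega_sq_add_omega_add_one⟩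

lemma im_jacobiSum {χ : MulChar F EisensteinInt} (hχ : χ ≠ 1) (hχ3 : χ ^ 3 = 1) :
    (jacobiSum χ χ).im = 3 * ((groupAlgebraSum fun x ↦ (χ x).im) ^ 3).coeff 1 := by
  have h := coeff_one_sub_groupAlgebraSum_inv_pow_three hχ hχ3
  rw [sub_groupAlgebraSum_inv_eq, smul_pow, ← map_pow, jacobiSum_inv_inv, ← neg_sub,
    sub_star_eq, pow_succ, two_mul_omega_add_one_sq] at h
  rw [AddMonoidAlgebra.coeff_smul, Finsupp.smul_apply, smul_eq_mul,
    AddMonoidAlgebra.coeff_mapRingHom, eq_intCast] at h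
  have hne : (2 * ω + 1 : EisensteinInt) ≠ 0 := fun h0 ↦ by
    simpa [h0] using two_mul_omega_add_one_sq
  have him := mul_right_cancel₀ hne (a := ((jacobiSum χ χ).im : EisensteinInt))
    (c := 3 * ↑(((groupAlgebraSum fun x ↦ (χ x).im) ^ 3).coeff 1)) (by linear_combination h)
  exact_mod_cast him

lemma im_jacobiSum_modEq (h3 : (3 : F) ≠ 0) {χ : MulChar F EisensteinInt} (hχ : χ ≠ 1)
    (hχ3 : χ ^ 3 = 1) : (jacobiSum χ χ).im ≡ 3 * (χ 3⁻¹).im [ZMOD 9] := by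
  rw [im_jacobiSum hχ hχ3]
  exact (coeff_one_groupAlgebraSum_pow_modEq (ℓ := 3) h3 _).mul_left' (c := 3)

end Jacobi

section ResidueCharacter

variable {F : Type*} [Field F] [Fintype F] {m : ℕ}

lemma three_ne_zero_of_card_eq (hcard : Fintype.card F = 3 * m + 1) : (3 : F) ≠ 0 := fun h3 ↦ by
  have hzero := FiniteField.cast_card_eq_zero F
  rw [hcard, Nat.cast_add, Nat.cast_mul, Nat.cast_ofNat, h3, zero_mul, zero_add] at hzero
  exact one_ne_zero (Nat.cast_one.symm.trans hzero)

lemma exists_mulChar_map_eq_pow (hcard : Fintype.card F = 3 * m + 1) (φ : EisensteinInt →+* F) :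
    ∃ χ : MulChar F EisensteinInt, χ ≠ 1 ∧ χ ^ 3 = 1 ∧ ∀ x, φ (χ x) = x ^ m := by
  classical
  have hm : 0 < m := by
    have := Fintype.one_lt_card (α := F)
    omega
  have hcard_units : Fintype.card Fˣ = 3 * m := by
    rw [Fintype.card_units, hcard, add_tsub_cancel_right]
  obtain ⟨u, hu⟩ := IsCyclic.exists_generator (α := Fˣ)
  have hum : u ^ m ≠ 1 := fun h ↦ by
    have := orderOf_le_of_pow_eq_one hm h
    rw [orderOf_eq_card_of_forall_mem_zpowers hu, Nat.card_eq_fintype_card] at this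
    omega
  have hum3 : ((u : F) ^ m) ^ 3 = 1 := by
    rw [← pow_mul, mul_comm, ← hcard_units, ← Units.val_pow_eq_pow_val, pow_card_eq_one,
      Units.val_one]
  have hr := isPrimitiveRoot_map_omega (three_ne_zero_of_card_eq hcard) φ
  obtain ⟨i, -, hi⟩ := hr.eq_pow_of_pow_eq_one hum3
  obtain ⟨χ, hχ3, hχu⟩ := exists_mulChar_pow_eq_one_apply_eq three_ne_zero ⟨m, hcard_units⟩ hu
    (show ((ω : EisensteinInt) ^ i) ^ 3 = 1 by
      rw [pow_right_comm, isPrimitiveRoot_omega.pow_eq_one, one_pow])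
  have hφu : φ (χ u) = (u : F) ^ m := by rw [hχu, map_pow, hi]
  refine ⟨χ, fun h ↦ hum <| Units.ext ?_, hχ3, fun x ↦ ?_⟩
  · rw [Units.val_pow_eq_pow_val, ← hφu, h, MulChar.one_apply_coe, map_one, Units.val_one]
  · rcases eq_or_ne x 0 with rfl | hx
    · rw [MulChar.map_zero, map_zero, zero_pow hm.ne']
    · obtain ⟨k, hk⟩ := mem_powers_iff_mem_zpowers.mpr (hu (Units.mk0 x hx))
      have hxk : x = (u : F) ^ k := congrArg Units.val hk.symm
      rw [hxk, map_pow, map_pow, hφu, pow_right_comm]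

lemma map_jacobiSum_eq_zero (hcard : Fintype.card F = 3 * m + 1) {φ : EisensteinInt →+* F}
    {χ : MulChar F EisensteinInt} (hχ : ∀ x, φ (χ x) = x ^ m) : φ (jacobiSum χ χ) = 0 := by
  have hm := Fintype.one_lt_card (α := F)
  have hdeg : ((Polynomial.X * (1 - Polynomial.X) : Polynomial F) ^ m).natDegree ≤ m * 2 :=
    Polynomial.natDegree_pow_le_of_le m (by compute_degree)
  rw [← sum_eval_eq_zero_of_natDegree_lt (hdeg.trans_lt (by omega))]
  simp [jacobiSum, hχ, mul_pow]

lemma three_pow_eq_map_omega_iff_of_jacobiSum (h3 : (3 : F) ≠ 0) {φ : EisensteinInt →+* F}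
    {χ : MulChar F EisensteinInt} (hχ : χ ≠ 1) (hχ3 : χ ^ 3 = 1) (hφχ : ∀ x, φ (χ x) = x ^ m) :
    (3 : F) ^ m = φ ω ↔ (jacobiSum χ χ).im ≡ -3 [ZMOD 9] := by
  have hr := isPrimitiveRoot_map_omega h3 φ
  obtain ⟨i, hi, hχi⟩ := MulChar.exists_apply_eq_pow hχ3 isPrimitiveRoot_omega (inv_ne_zero h3)
  have h3m : (3 : F) ^ m * φ ω ^ i = 1 := by
    rw [← map_pow, ← hχi, hφχ, ← mul_pow, mul_inv_cancel₀ h3, one_pow]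
  have hpow : (3 : F) ^ m = φ ω ↔ 3 ∣ i + 1 := by
    rw [← hr.pow_eq_one_iff_dvd, pow_succ', ← h3m,
      mul_left_inj' (pow_ne_zero i (hr.ne_zero three_ne_zero)), eq_comm]
  have him : ((ω : EisensteinInt) ^ i).im ≡ -1 [ZMOD 3] ↔ 3 ∣ i + 1 := by
    interval_cases i <;> simp [sq, Int.ModEq]
  have hJ := im_jacobiSum_modEq h3 hχ hχ3
  rw [hpow, ← him, ← hχi]
  simp only [Int.ModEq] at hJ ⊢
  omega

end ResidueCharacter

section CubicCharacterOfThree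

variable {p m : ℕ} [Fact p.Prime]

theorem three_pow_eq_map_omega_iff_of_isPrimary (hpm : p = 3 * m + 1)
    {φ : EisensteinInt →+* ZMod p} {π : EisensteinInt} (hπ : IsPrimary π) (hnorm : π.norm = p)
    (hφ : φ π = 0) : (3 : ZMod p) ^ m = φ ω ↔ π.im ≡ -3 [ZMOD 9] := by
  have hcard : Fintype.card (ZMod p) = 3 * m + 1 := (ZMod.card p).trans hpm
  have h3 := three_ne_zero_of_card_eq hcard
  obtain ⟨χ, hχ, hχ3, hφχ⟩ := exists_mulChar_map_eq_pow hcard φ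
  have hJ : jacobiSum χ χ = π := eq_of_isPrimary_of_map_eq_zero h3 φ
    (isPrimary_jacobiSum hχ3 ⟨m, by rw [hcard, add_tsub_cancel_right]⟩) hπ
    (by rw [norm_jacobiSum hχ hχ3, ZMod.card]) hnorm (map_jacobiSum_eq_zero hcard hφχ) hφ
  rw [← hJ, three_pow_eq_map_omega_iff_of_jacobiSum h3 hχ hχ3 hφχ]

theorem three_pow_eq_map_omega_iff (hpm : p = 3 * m + 1) {φ : EisensteinInt →+* ZMod p}
    {π : EisensteinInt} (him : 3 ∣ π.im) (hnorm : π.norm = p) (hφ : φ π = 0) :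
    (3 : ZMod p) ^ m = φ ω ↔ π.im ≡ 3 * π.re [ZMOD 9] := by
  rcases isPrimary_or_isPrimary_neg (by omega) him with hπ | hπ
  · rw [three_pow_eq_map_omega_iff_of_isPrimary hpm hπ hnorm hφ]
    simp only [isPrimary_iff, Int.ModEq] at hπ ⊢
    omega
  · rw [three_pow_eq_map_omega_iff_of_isPrimary hpm hπ (by simpa using hnorm)
      (by rw [map_neg, hφ, neg_zero])]
    simp only [isPrimary_iff, QuadraticAlgebra.re_neg, QuadraticAlgebra.im_neg, Int.ModEq] at hπ ⊢
    omega

end CubicCharacterOfThree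

lemma exists_norm_eq_of_four_mul_eq {n L M : ℤ} (h : 4 * n = L ^ 2 + 27 * M ^ 2) :
    ∃ π : EisensteinInt, π.norm = n ∧ L = 2 * π.re - π.im ∧ π.im = 3 * M := by
  have hpar : Even (L + 3 * M) := by
    have : Even (L ^ 2 + 27 * M ^ 2) := ⟨2 * n, by linear_combination -h⟩
    have h27 : ¬ Even (27 : ℤ) := by decide
    have h3 : ¬ Even (3 : ℤ) := by decide
    simpa [Int.even_add, Int.even_mul, Int.even_pow, h27, h3] using this
  obtain ⟨a, ha⟩ := hpar
  obtain rfl : L = 2 * a - 3 * M := by omega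
  have hnorm := four_mul_norm ⟨a, 3 * M⟩
  dsimp only at hnorm
  exact ⟨⟨a, 3 * M⟩, by linarith, rfl, rfl⟩

lemma neg_re_div_im_eq {K : Type*} [Field K] (h2 : (2 : K) ≠ 0) {L M : ℤ} {π : EisensteinInt}
    (hL : L = 2 * π.re - π.im) (hM : π.im = 3 * M) :
    -(π.re : K) / π.im = ((-(L + 3 * M) : ℤ) : K) * ((6 * M : ℤ) : K)⁻¹ := by
  rw [← div_eq_mul_inv, show -(L + 3 * M) = 2 * -π.re by omega, show 6 * M = 2 * π.im by omega]
  push_cast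
  rw [mul_div_mul_left _ _ h2]

end EisensteinInt

/-- For a prime `p ≡ 1 (mod 3)` with `4p = L² + 27M²`,
`3^{(p−1)/3} ≡ −(L+3M)(6M)⁻¹ (mod p)` iff `L ≡ −M (mod 3)`. -/
theorem three_character_omega_iff (p : ℕ) (hp : p.Prime) (hp3 : p % 3 = 1)
    (L M : ℤ) (h : (4 * p : ℤ) = L ^ 2 + 27 * M ^ 2) :
    (3 : ZMod p) ^ ((p - 1) / 3) =
        ((-(L + 3 * M) : ℤ) : ZMod p) * (((6 * M : ℤ) : ZMod p))⁻¹ ↔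
      L ≡ -M [ZMOD 3] := by
  have : Fact p.Prime := ⟨hp⟩
  obtain ⟨π, hnorm, hL, hM⟩ := EisensteinInt.exists_norm_eq_of_four_mul_eq h
  obtain ⟨φ, hω, hπ⟩ := EisensteinInt.exists_ringHom_map_eq_zero hnorm
  have h2 : (2 : ZMod p) ≠ 0 := Ring.two_ne_zero (by rw [ZMod.ringChar_zmod_n]; omega)
  rw [← EisensteinInt.neg_re_div_im_eq h2 hL hM, ← hω,
    EisensteinInt.three_pow_eq_map_omega_iff (by omega) ⟨M, hM⟩ hnorm hπ]
  simp only [Int.ModEq]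
  omega
end
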